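/- Under Assumptions 1, 4, and 5, the gradient descent iterates satisfy, for all t: (i) ∑_{τ=0}^{t−1} η_τ² ‖∇R(W(τ))‖² ≤ ∑_{τ=0}^{t−1} η_τ ‖∇R(W(τ))‖² ≤ 2R(W(0)) − 2R(W(t)) ≤ 2R(W(0)); and (ii) for any two layers 1 ≤ k < j ≤ L, |(‖W_k(t)‖_F² − ‖W_j(t)‖_F²) − (‖W_k(0)‖_F² − ‖W_j(0)‖_F²)| ≤ 2R(W(0)). -/

import Mathlib

/-!
Let `D` be a direction in parameter space. Along the line `s ↦ W + s D`, the network output on an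
input `v` of norm at most one is a polynomial in `s` whose values and first derivatives are
controlled layer by layer. Inside the ball of radius `R`, its first derivative is at most
`R ^ (L-1) * S` and is Lipschitz in `s` with constant `R ^ (L-2) * S ^ 2`, where `S` is the sum of
the Frobenius norms of the blocks of `D` (`segment_bounds`). With the Lipschitz bound on `ℓ'`, this
shows that the directional derivative of the risk is Lipschitz along segments
(`abs_dirDeriv_line_sub_le`), and hence that a quadratic upper bound holds (`riskW_line_le`).

The chain rule identifies the directional derivative with the pairing against the layer gradients
(`dirDeriv_eq_sum`). The same bounds show that a gradient step moves each layer by at most one, so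
the step stays in the ball where the quadratic bound applies. The choice of step size then gives
`R(W(t+1)) ≤ R(W(t)) - η_t / 2 * ‖∇R(W(t))‖²` (`descent_step`). Summing over `t`, together with
`0 ≤ η_t ≤ 1` and the nonnegativity of the risk, gives the first claim.

For the second claim, the output is linear in each layer, so `⟨∂R/∂W_k, W_k⟩` is the same number for
every layer (`frobInner_gradLayer_self`). In `‖W_k(t+1)‖² - ‖W_j(t+1)‖²` the first-order terms in
`η_t` therefore cancel, and what remains is at most `η_t² ‖∇R(W(t))‖²`, whose sum is bounded by the
first claim.
-/

open Matrix Filter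
open scoped BigOperators

noncomputable section

/-- Euclidean norm of a vector in `ℝ^m`. -/
def vecNorm {m : Type*} [Fintype m] (v : m → ℝ) : ℝ :=
  Real.sqrt (∑ i, (v i) ^ 2)

/-- Frobenius norm of a real matrix. -/
def frobNorm {m n : Type*} [Fintype m] [Fintype n] (M : Matrix m n ℝ) : ℝ :=
  Real.sqrt (∑ i, ∑ j, (M i j) ^ 2)

/-- Spectral norm (operator 2-norm) of a real matrix. -/
def specNorm {m n : Type*} [Fintype m] [Fintype n] (M : Matrix m n ℝ) : ℝ :=
  sSup {c : ℝ | ∃ v : n → ℝ, vecNorm v = 1 ∧ c = vecNorm (M.mulVec v)}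

/-- `(u, v)` is a top singular vector pair of `M`: both are unit vectors,
`M v = ‖M‖₂ u` and `Mᵀ u = ‖M‖₂ v`. -/
def IsTopSingularPair {m n : Type*} [Fintype m] [Fintype n]
    (M : Matrix m n ℝ) (u : m → ℝ) (v : n → ℝ) : Prop :=
  vecNorm u = 1 ∧ vecNorm v = 1 ∧
    M.mulVec v = specNorm M • u ∧ Mᵀ.mulVec u = specNorm M • v

/-- Parameters of a deep linear network: layer `k` (0-indexed; paper layer `k+1`)
is a matrix mapping `ℝ^{dim k}` to `ℝ^{dim (k+1)}`. -/
abbrev Layers (dim : ℕ → ℕ) := ∀ j : ℕ, Matrix (Fin (dim (j+1))) (Fin (dim j)) ℝ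

/-- Product `W_{j-1} ⋯ W_0` of the bottom `j` layers (paper: `W_j ⋯ W_1`). -/
def prodUpTo {dim : ℕ → ℕ} (W : Layers dim) : ∀ j : ℕ, Matrix (Fin (dim j)) (Fin (dim 0)) ℝ
  | 0 => 1
  | (j+1) => W j * prodUpTo W j

/-- Product `W_{L-1} ⋯ W_j` of the layers from `j` up to the top layer `L-1`
(paper: `W_L ⋯ W_{j+1}`); for `j ≥ L` it is a pseudo-identity. -/
def prodFrom {dim : ℕ → ℕ} (L : ℕ) (W : Layers dim) (j : ℕ) :
    Matrix (Fin (dim L)) (Fin (dim j)) ℝ :=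
  if h : j < L then prodFrom L W (j+1) * W j
  else Matrix.of fun i j' => if (i : ℕ) = (j' : ℕ) then 1 else 0
  termination_by L - j
  decreasing_by omega

/-- The linear predictor `w_prod = (W_L ⋯ W_1)ᵀ ∈ ℝ^d` induced by the network
(recall `dim L = 1`). -/
def wprod {dim : ℕ → ℕ} (L : ℕ) (W : Layers dim) : Fin (dim 0) → ℝ :=
  fun j => ∑ a, prodUpTo W L a j

/-- Empirical risk of a linear predictor `w`: `R(w) = (1/n) ∑ᵢ ℓ(⟨w, zᵢ⟩)`. -/
def riskV {n d : ℕ} (ℓ : ℝ → ℝ) (z : Fin n → Fin d → ℝ) (w : Fin d → ℝ) : ℝ :=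
  (n : ℝ)⁻¹ * ∑ i, ℓ (w ⬝ᵥ z i)

/-- Gradient of the risk w.r.t. the linear predictor: `∇R(w) = (1/n) ∑ᵢ ℓ'(⟨w, zᵢ⟩) zᵢ`. -/
def gradRiskV {n d : ℕ} (ℓ' : ℝ → ℝ) (z : Fin n → Fin d → ℝ) (w : Fin d → ℝ) :
    Fin d → ℝ :=
  (n : ℝ)⁻¹ • ∑ i, ℓ' (w ⬝ᵥ z i) • z i

/-- The partial gradient of the empirical risk with respect to layer `k`:
`∂R/∂W_k = (W_L ⋯ W_{k+1})ᵀ ∇R(w_prod)ᵀ (W_{k-1} ⋯ W_1)ᵀ`. -/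
def gradLayer {dim : ℕ → ℕ} (L : ℕ) (ℓ' : ℝ → ℝ) {n : ℕ}
    (z : Fin n → Fin (dim 0) → ℝ) (W : Layers dim) (k : ℕ) :
    Matrix (Fin (dim (k+1))) (Fin (dim k)) ℝ :=
  (prodFrom L W (k+1))ᵀ *
    (Matrix.of fun (_ : Fin (dim L)) (j : Fin (dim 0)) => gradRiskV ℓ' z (wprod L W) j) *
    (prodUpTo W k)ᵀ

/-- Empirical risk of the network. -/
def riskW {dim : ℕ → ℕ} (L : ℕ) (ℓ : ℝ → ℝ) {n : ℕ}
    (z : Fin n → Fin (dim 0) → ℝ) (W : Layers dim) : ℝ :=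
  riskV ℓ z (wprod L W)

/-- Gradient flow: `dW(t)/dt = −∇R(W(t))` for all `t ≥ 0`, entrywise on each layer. -/
def IsGradientFlow {dim : ℕ → ℕ} (L : ℕ) (ℓ' : ℝ → ℝ) {n : ℕ}
    (z : Fin n → Fin (dim 0) → ℝ) (W : ℝ → Layers dim) : Prop :=
  ∀ t : ℝ, 0 ≤ t → ∀ k < L, ∀ i j,
    HasDerivAt (fun s => W s k i j) (-(gradLayer L ℓ' z (W t) k i j)) t

/-- The initialization-dependent constant `D`. -/
def Dconst {dim : ℕ → ℕ} (L : ℕ) (W0 : Layers dim) : ℝ :=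
  (⨆ k : Fin L, frobNorm (W0 k) ^ 2) - frobNorm (W0 (L-1)) ^ 2
    + ∑ k ∈ Finset.range (L-1),
        specNorm (W0 k * (W0 k)ᵀ - (W0 (k+1))ᵀ * W0 (k+1))

/-- Euclidean norm of a parameter tuple (all entries of the first `L` layers concatenated). -/
def paramNorm {dim : ℕ → ℕ} (L : ℕ) (V : Layers dim) : ℝ :=
  Real.sqrt (∑ k ∈ Finset.range L, frobNorm (V k) ^ 2)

/-- Squared Euclidean norm of the full gradient `∇R(W)`. -/
def gradNormSq {dim : ℕ → ℕ} (L : ℕ) (ℓ' : ℝ → ℝ) {n : ℕ}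
    (z : Fin n → Fin (dim 0) → ℝ) (W : Layers dim) : ℝ :=
  ∑ k ∈ Finset.range L, frobNorm (gradLayer L ℓ' z W k) ^ 2

/-- The data-dependent constant `α = min_{‖ξ‖=1, ξ ⟂ ū} max_{i ∈ S} ⟨ξ, zᵢ⟩`,
where `S` is the set of support vectors. -/
def alphaConst {n d : ℕ} (z : Fin n → Fin d → ℝ) (ubar : Fin d → ℝ) (γ : ℝ) : ℝ :=
  sInf {c : ℝ | ∃ ξ : Fin d → ℝ, vecNorm ξ = 1 ∧ ξ ⬝ᵥ ubar = 0 ∧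
    c = sSup {r : ℝ | ∃ i : Fin n, ubar ⬝ᵥ z i = γ ∧ r = ξ ⬝ᵥ z i}}

/-- Orthogonal projection onto the orthogonal complement of `span(ū)` (for `ū` a unit vector). -/
def projPerp {d : ℕ} (ubar : Fin d → ℝ) (w : Fin d → ℝ) : Fin d → ℝ :=
  w - (w ⬝ᵥ ubar) • ubar

/-! ### Euclidean and Frobenius norms -/

lemma vecNorm_eq {m : Type*} [Fintype m] (v : m → ℝ) : vecNorm v = ‖WithLp.toLp 2 v‖ := by
  simp [vecNorm, EuclideanSpace.norm_eq]

lemma frobNorm_eq {m n : Type*} [Fintype m] [Fintype n] (M : Matrix m n ℝ) :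
    frobNorm M = vecNorm (fun p : m × n => M p.1 p.2) := by
  simp [frobNorm, vecNorm, Fintype.sum_prod_type]

lemma vecNorm_nonneg {m : Type*} [Fintype m] (v : m → ℝ) : 0 ≤ vecNorm v := Real.sqrt_nonneg _

lemma frobNorm_nonneg {m n : Type*} [Fintype m] [Fintype n] (M : Matrix m n ℝ) :
    0 ≤ frobNorm M := Real.sqrt_nonneg _

lemma vecNorm_add_le {m : Type*} [Fintype m] (v w : m → ℝ) :
    vecNorm (v + w) ≤ vecNorm v + vecNorm w := by
  simpa [vecNorm_eq] using norm_add_le (WithLp.toLp 2 v) (WithLp.toLp 2 w)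

lemma vecNorm_smul {m : Type*} [Fintype m] (c : ℝ) (v : m → ℝ) :
    vecNorm (c • v) = |c| * vecNorm v := by
  simp [vecNorm_eq, norm_smul]

lemma frobNorm_add_le {m n : Type*} [Fintype m] [Fintype n] (A B : Matrix m n ℝ) :
    frobNorm (A + B) ≤ frobNorm A + frobNorm B := by
  simp only [frobNorm_eq]
  exact vecNorm_add_le _ _

lemma frobNorm_smul {m n : Type*} [Fintype m] [Fintype n] (c : ℝ) (A : Matrix m n ℝ) :
    frobNorm (c • A) = |c| * frobNorm A := by
  simp only [frobNorm_eq]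
  exact vecNorm_smul _ _

lemma vecNorm_mulVec_le {m n : Type*} [Fintype m] [Fintype n] (A : Matrix m n ℝ) (v : n → ℝ) :
    vecNorm (A *ᵥ v) ≤ frobNorm A * vecNorm v := by
  unfold vecNorm frobNorm
  rw [← Real.sqrt_mul (by positivity), Finset.sum_mul]
  refine Real.sqrt_le_sqrt (Finset.sum_le_sum fun i _ => ?_)
  simpa [Matrix.mulVec, dotProduct] using Finset.sum_mul_sq_le_sq_mul_sq Finset.univ (A i) v

/-- The Frobenius inner product of two real matrices. -/
def frobInner {m n : Type*} [Fintype m] [Fintype n] (A B : Matrix m n ℝ) : ℝ :=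
  ∑ i, ∑ j, A i j * B i j

lemma frobInner_self {m n : Type*} [Fintype m] [Fintype n] (A : Matrix m n ℝ) :
    frobInner A A = frobNorm A ^ 2 := by
  unfold frobInner frobNorm
  rw [Real.sq_sqrt (by positivity)]
  simp [sq]

lemma frobInner_smul_right {m n : Type*} [Fintype m] [Fintype n] (c : ℝ) (A B : Matrix m n ℝ) :
    frobInner A (c • B) = c * frobInner A B := by
  simp only [frobInner, Finset.mul_sum, Matrix.smul_apply, smul_eq_mul]
  exact Finset.sum_congr rfl fun i _ => Finset.sum_congr rfl fun j _ => by ring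

lemma frobNorm_sub_smul_sq {m n : Type*} [Fintype m] [Fintype n] (c : ℝ) (A B : Matrix m n ℝ) :
    frobNorm (A - c • B) ^ 2
      = frobNorm A ^ 2 - 2 * c * frobInner B A + c ^ 2 * frobNorm B ^ 2 := by
  simp only [← frobInner_self, frobInner, Finset.mul_sum, ← Finset.sum_sub_distrib,
    ← Finset.sum_add_distrib, Matrix.sub_apply, Matrix.smul_apply, smul_eq_mul]
  exact Finset.sum_congr rfl fun i _ => Finset.sum_congr rfl fun j _ => by ring

/-- On a one-dimensional space the coordinate sum is bounded by the Euclidean norm. -/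
lemma abs_sum_le_vecNorm {m : ℕ} (hm : m = 1) (v : Fin m → ℝ) : |∑ a, v a| ≤ vecNorm v := by
  subst hm
  simp [vecNorm, Real.sqrt_sq_eq_abs]

section Network

variable {dim : ℕ → ℕ}

/-! ### The network along a line in parameter space -/

/-- The output `W_{j-1} ⋯ W_0 v` of the bottom `j` layers on the input vector `v`. -/
def fwd (W : Layers dim) (v : Fin (dim 0) → ℝ) (j : ℕ) : Fin (dim j) → ℝ :=
  prodUpTo W j *ᵥ v

lemma fwd_zero (W : Layers dim) (v : Fin (dim 0) → ℝ) : fwd W v 0 = v := by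
  simp [fwd, prodUpTo]

lemma fwd_succ (W : Layers dim) (v : Fin (dim 0) → ℝ) (j : ℕ) :
    fwd W v (j+1) = W j *ᵥ fwd W v j := by
  simp [fwd, prodUpTo]

/-- The derivative of the output `fwd W v j` when the parameters `W` move in direction `D`,
computed layer by layer with the product rule. -/
def tang (W D : Layers dim) (v : Fin (dim 0) → ℝ) : ∀ j : ℕ, Fin (dim j) → ℝ
  | 0 => 0
  | (j+1) => D j *ᵥ fwd W v j + W j *ᵥ tang W D v j

/-- The point `W + s D` on the line through `W` with direction `D`. -/
def line (W D : Layers dim) (s : ℝ) : Layers dim := fun k => W k + s • D k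

lemma line_zero (W D : Layers dim) : line W D 0 = W := by
  funext k; simp [line]

lemma hasDerivAt_fwd (W D : Layers dim) (v : Fin (dim 0) → ℝ) (s : ℝ) (j : ℕ) :
    ∀ i, HasDerivAt (fun s => fwd (line W D s) v j i) (tang (line W D s) D v j i) s := by
  induction j with
  | zero => intro i; simpa [fwd_zero, tang] using hasDerivAt_const s (v i)
  | succ j ih =>
    intro i
    have hentry : ∀ l, HasDerivAt (fun s => line W D s j i l) (D j i l) s := by
      intro l
      simpa [line] using ((hasDerivAt_id s).mul_const (D j i l)).const_add (W j i l)
    have h := HasDerivAt.fun_sum (u := Finset.univ) fun l _ => (hentry l).mul (ih l)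
    have e : (fun s => fwd (line W D s) v (j+1) i)
        = fun s => ∑ l, line W D s j i l * fwd (line W D s) v j l := by
      funext s; rw [fwd_succ]; rfl
    rw [e]
    refine h.congr_deriv ?_
    rw [Finset.sum_add_distrib]
    rfl

/-- Bounds for the network output and its derivative along a segment inside the ball of radius `R`.
With `S j` the sum of the norms of the first `j` blocks of the direction, the output grows at most
like `R ^ j`, its first derivative like `R ^ (j - 1) * S j`, and the derivative is Lipschitz along
the segment with constant `R ^ (j - 2) * S j ^ 2`; multiplying through by powers of `R` avoids
negative exponents. -/
lemma segment_bounds (L : ℕ) (W D : Layers dim) (R s : ℝ) (hR : 1 ≤ R) (hs : 0 ≤ s)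
    (hW : ∀ k < L, frobNorm (W k) ≤ R) (hV : ∀ k < L, frobNorm (line W D s k) ≤ R)
    (v : Fin (dim 0) → ℝ) (hv : vecNorm v ≤ 1) (j : ℕ) (hj : j ≤ L) :
    vecNorm (fwd (line W D s) v j) ≤ R ^ j ∧
    R * vecNorm (tang (line W D s) D v j)
      ≤ R ^ j * ∑ k ∈ Finset.range j, frobNorm (D k) ∧
    R * vecNorm (fwd (line W D s) v j - fwd W v j)
      ≤ s * R ^ j * ∑ k ∈ Finset.range j, frobNorm (D k) ∧
    R ^ 2 * vecNorm (tang (line W D s) D v j - tang W D v j)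
      ≤ s * R ^ j * (∑ k ∈ Finset.range j, frobNorm (D k)) ^ 2 := by
  induction j with
  | zero =>
    have h0 : vecNorm (0 : Fin (dim 0) → ℝ) = 0 := by simp [vecNorm]
    simp [fwd_zero, tang, hv, h0]
  | succ j ih =>
    obtain ⟨h1, h2, h3, h4⟩ := ih (by omega)
    have hWj := hW j hj
    have hVj := hV j hj
    rw [Finset.sum_range_succ]
    set S := ∑ k ∈ Finset.range j, frobNorm (D k)
    set d := frobNorm (D j)
    set V := line W D s
    have hd : 0 ≤ d := frobNorm_nonneg _
    have hS : 0 ≤ S := Finset.sum_nonneg fun k _ => frobNorm_nonneg _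
    have hR0 : 0 ≤ R := by linarith
    have hVW : V j = W j + s • D j := rfl
    have hA : ∀ w, vecNorm (D j *ᵥ w) ≤ d * vecNorm w := vecNorm_mulVec_le _
    have hB : ∀ w, vecNorm (V j *ᵥ w) ≤ R * vecNorm w := fun w =>
      (vecNorm_mulVec_le _ w).trans (mul_le_mul_of_nonneg_right hVj (vecNorm_nonneg _))
    have hC : ∀ w, vecNorm (W j *ᵥ w) ≤ R * vecNorm w := fun w =>
      (vecNorm_mulVec_le _ w).trans (mul_le_mul_of_nonneg_right hWj (vecNorm_nonneg _))
    have e3 : fwd V v (j+1) - fwd W v (j+1)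
        = s • (D j *ᵥ fwd V v j) + W j *ᵥ (fwd V v j - fwd W v j) := by
      rw [fwd_succ, fwd_succ, hVW, Matrix.add_mulVec, Matrix.smul_mulVec, Matrix.mulVec_sub]
      abel
    have e4 : tang V D v (j+1) - tang W D v (j+1)
        = (D j *ᵥ (fwd V v j - fwd W v j) + s • (D j *ᵥ tang V D v j))
          + W j *ᵥ (tang V D v j - tang W D v j) := by
      simp only [tang]
      rw [hVW, Matrix.add_mulVec, Matrix.smul_mulVec, Matrix.mulVec_sub, Matrix.mulVec_sub]
      abel
    refine ⟨?_, ?_, ?_, ?_⟩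
    · rw [fwd_succ, pow_succ']
      exact (hB _).trans (mul_le_mul_of_nonneg_left h1 hR0)
    · have t := vecNorm_add_le (D j *ᵥ fwd V v j) (V j *ᵥ tang V D v j)
      have t1 := (hA (fwd V v j)).trans (mul_le_mul_of_nonneg_left h1 hd)
      have t2 := (hB (tang V D v j)).trans h2
      calc R * vecNorm (tang V D v (j+1)) ≤ R * (d * R ^ j + R ^ j * S) :=
            mul_le_mul_of_nonneg_left (by simp only [tang]; linarith) hR0
        _ = _ := by ring
    · have t := vecNorm_add_le (s • (D j *ᵥ fwd V v j)) (W j *ᵥ (fwd V v j - fwd W v j))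
      rw [vecNorm_smul, abs_of_nonneg hs] at t
      have t1 := mul_le_mul_of_nonneg_left
        ((hA (fwd V v j)).trans (mul_le_mul_of_nonneg_left h1 hd)) hs
      have t2 := (hC (fwd V v j - fwd W v j)).trans h3
      calc R * vecNorm (fwd V v (j+1) - fwd W v (j+1))
          ≤ R * (s * (d * R ^ j) + s * R ^ j * S) :=
            mul_le_mul_of_nonneg_left (by rw [e3]; linarith) hR0
        _ = _ := by ring
    · have t := vecNorm_add_le (D j *ᵥ (fwd V v j - fwd W v j) + s • (D j *ᵥ tang V D v j))
        (W j *ᵥ (tang V D v j - tang W D v j))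
      have t' := vecNorm_add_le (D j *ᵥ (fwd V v j - fwd W v j)) (s • (D j *ᵥ tang V D v j))
      rw [vecNorm_smul, abs_of_nonneg hs] at t'
      have t1 := mul_le_mul_of_nonneg_left (hA (fwd V v j - fwd W v j)) hR0
      have t1' := mul_le_mul_of_nonneg_left h3 hd
      have t2 := mul_le_mul_of_nonneg_left (hA (tang V D v j)) (mul_nonneg hR0 hs)
      have t2' := mul_le_mul_of_nonneg_left h2 (mul_nonneg hs hd)
      have t3 := mul_le_mul_of_nonneg_left (hC (tang V D v j - tang W D v j)) hR0
      have key : R * vecNorm (tang V D v (j+1) - tang W D v (j+1))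
          ≤ s * R ^ j * (2 * d * S) + s * R ^ j * S ^ 2 := by
        have t4 := mul_le_mul_of_nonneg_left (t.trans (add_le_add_left t' _)) hR0
        rw [e4]
        nlinarith
      calc R ^ 2 * vecNorm (tang V D v (j+1) - tang W D v (j+1))
          = R * (R * vecNorm (tang V D v (j+1) - tang W D v (j+1))) := by ring
        _ ≤ R * (s * R ^ j * (2 * d * S) + s * R ^ j * S ^ 2) :=
            mul_le_mul_of_nonneg_left key hR0
        _ ≤ R * (s * R ^ j * (2 * d * S) + s * R ^ j * S ^ 2) + s * R ^ (j+1) * d ^ 2 :=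
            le_add_of_nonneg_right (by positivity)
        _ = _ := by ring

/-! ### Layer gradients and directional derivatives -/

lemma prodFrom_self (L : ℕ) (W : Layers dim) : prodFrom L W L = 1 := by
  rw [prodFrom]
  ext i j
  simp [Matrix.one_apply, Fin.ext_iff]

lemma prodFrom_of_lt {L j : ℕ} (h : j < L) (W : Layers dim) :
    prodFrom L W j = prodFrom L W (j+1) * W j := by
  rw [prodFrom]; simp [h]

lemma prodFrom_mulVec_fwd (L : ℕ) (W : Layers dim) (v : Fin (dim 0) → ℝ) (j : ℕ) (hj : j ≤ L) :
    prodFrom L W j *ᵥ fwd W v j = fwd W v L := by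
  induction hj using Nat.decreasingInduction with
  | self => simp [prodFrom_self]
  | of_succ k hk ih =>
    rw [← ih, fwd_succ, prodFrom_of_lt hk, Matrix.mulVec_mulVec]

lemma prodFrom_mulVec_tang (L : ℕ) (W D : Layers dim) (v : Fin (dim 0) → ℝ) (j : ℕ)
    (hj : j ≤ L) :
    prodFrom L W j *ᵥ tang W D v j
      = ∑ k ∈ Finset.range j, prodFrom L W (k+1) *ᵥ (D k *ᵥ fwd W v k) := by
  induction j with
  | zero => simp [tang]
  | succ j ih =>
    rw [Finset.sum_range_succ, ← ih (by omega), prodFrom_of_lt (show j < L by omega)]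
    simp only [tang, Matrix.mulVec_add, Matrix.mulVec_mulVec]
    abel

lemma wprod_dotProduct (L : ℕ) (W : Layers dim) (v : Fin (dim 0) → ℝ) :
    wprod L W ⬝ᵥ v = ∑ a, fwd W v L a := by
  simp only [wprod, fwd, Matrix.mulVec, dotProduct, Finset.sum_mul]
  exact Finset.sum_comm

/-- Pairing a layer gradient with a matrix `E` amounts to inserting `E` in place of that layer
and differentiating the loss. -/
lemma frobInner_gradLayer (L : ℕ) (ℓ' : ℝ → ℝ) {n : ℕ} (z : Fin n → Fin (dim 0) → ℝ)
    (W : Layers dim) (k : ℕ) (E : Matrix (Fin (dim (k+1))) (Fin (dim k)) ℝ) :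
    frobInner (gradLayer L ℓ' z W k) E
      = (n : ℝ)⁻¹ * ∑ i, ℓ' (wprod L W ⬝ᵥ z i)
          * ∑ a, (prodFrom L W (k+1) *ᵥ (E *ᵥ fwd W (z i) k)) a := by
  set P := prodFrom L W (k+1)
  set Q := prodUpTo W k
  set g := gradRiskV ℓ' z (wprod L W)
  have h1 : frobInner (gradLayer L ℓ' z W k) E = ∑ a, ((P * E * Q) *ᵥ g) a := by
    have : frobInner (gradLayer L ℓ' z W k) E
        = ((gradLayer L ℓ' z W k)ᵀ * E).trace := by
      simp only [frobInner, Matrix.trace, Matrix.diag_apply, Matrix.mul_apply,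
        Matrix.transpose_apply]
      exact Finset.sum_comm
    rw [this]
    simp only [gradLayer, Matrix.transpose_mul, Matrix.transpose_transpose]
    rw [Matrix.mul_assoc, Matrix.trace_mul_comm, Matrix.mul_assoc, Matrix.mul_assoc,
      Matrix.trace_mul_comm, ← Matrix.mul_assoc]
    simp [Matrix.trace, Matrix.mul_apply (N := (Matrix.of _)ᵀ), Matrix.mulVec, dotProduct, g, P, Q]
  have h2 : ∀ v, P *ᵥ (E *ᵥ fwd W v k) = (P * E * Q) *ᵥ v := by
    intro v
    simp [fwd, Matrix.mulVec_mulVec, Matrix.mul_assoc, P, Q]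
  rw [h1]
  simp only [h2]
  have h3 : (P * E * Q) *ᵥ g
      = (n : ℝ)⁻¹ • ∑ i, ℓ' (wprod L W ⬝ᵥ z i) • ((P * E * Q) *ᵥ z i) := by
    simp only [g, gradRiskV, Matrix.mulVec_smul, Matrix.mulVec_sum]
  rw [h3]
  simp only [Pi.smul_apply, Finset.sum_apply, smul_eq_mul, Finset.mul_sum]
  exact Finset.sum_comm

/-- The derivative of the empirical risk in direction `D`. -/
def dirDeriv (L : ℕ) (ℓ' : ℝ → ℝ) {n : ℕ} (z : Fin n → Fin (dim 0) → ℝ)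
    (W D : Layers dim) : ℝ :=
  (n : ℝ)⁻¹ * ∑ i, ℓ' (wprod L W ⬝ᵥ z i) * ∑ a, tang W D (z i) L a

lemma dirDeriv_eq_sum (L : ℕ) (ℓ' : ℝ → ℝ) {n : ℕ} (z : Fin n → Fin (dim 0) → ℝ)
    (W D : Layers dim) :
    dirDeriv L ℓ' z W D = ∑ k ∈ Finset.range L, frobInner (gradLayer L ℓ' z W k) (D k) := by
  have h : ∀ i, tang W D (z i) L
      = ∑ k ∈ Finset.range L, prodFrom L W (k+1) *ᵥ (D k *ᵥ fwd W (z i) k) := by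
    intro i
    rw [← prodFrom_mulVec_tang L W D (z i) L le_rfl, prodFrom_self, Matrix.one_mulVec]
  simp only [frobInner_gradLayer, dirDeriv, h, ← Finset.mul_sum, Finset.sum_apply]
  rw [Finset.sum_comm]
  congr 1
  refine Finset.sum_congr rfl fun i _ => ?_
  rw [← Finset.mul_sum, Finset.sum_comm]

/-- Euler's identity: `⟨∂R/∂W_k, W_k⟩` does not depend on the layer, because the network output is
linear in each layer separately. -/
lemma frobInner_gradLayer_self (L : ℕ) (ℓ' : ℝ → ℝ) {n : ℕ} (z : Fin n → Fin (dim 0) → ℝ)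
    (W : Layers dim) (k : ℕ) (hk : k < L) :
    frobInner (gradLayer L ℓ' z W k) (W k)
      = (n : ℝ)⁻¹ * ∑ i, ℓ' (wprod L W ⬝ᵥ z i) * ∑ a, fwd W (z i) L a := by
  rw [frobInner_gradLayer]
  simp only [← fwd_succ, prodFrom_mulVec_fwd L W _ (k+1) hk]

lemma hasDerivAt_riskW (L : ℕ) (ℓ ℓ' : ℝ → ℝ) (hderiv : ∀ s : ℝ, HasDerivAt ℓ (ℓ' s) s)
    {n : ℕ} (z : Fin n → Fin (dim 0) → ℝ) (W D : Layers dim) (s : ℝ) :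
    HasDerivAt (fun s => riskW L ℓ z (line W D s)) (dirDeriv L ℓ' z (line W D s) D) s := by
  unfold riskW riskV dirDeriv
  refine HasDerivAt.const_mul _ (HasDerivAt.fun_sum fun i _ => ?_)
  refine (hderiv _).comp s ?_
  simp only [wprod_dotProduct]
  exact HasDerivAt.fun_sum fun a _ => hasDerivAt_fwd W D (z i) s L a

/-! ### Smoothness and descent -/

lemma abs_average_le {n : ℕ} (hn : 0 < n) (f : Fin n → ℝ) (C : ℝ) (h : ∀ i, |f i| ≤ C) :
    |(n : ℝ)⁻¹ * ∑ i, f i| ≤ C := by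
  have hn' : (0 : ℝ) < n := by exact_mod_cast hn
  rw [abs_mul, abs_of_pos (inv_pos.2 hn'), inv_mul_le_iff₀ hn']
  refine (Finset.abs_sum_le_sum_abs _ _).trans ((Finset.sum_le_sum fun i _ => h i).trans ?_)
  simp

section Smoothness

variable {L n : ℕ} (hL : 1 ≤ L) (hdimL : dim L = 1) (hn : 0 < n)
  {z : Fin n → Fin (dim 0) → ℝ} (hz : ∀ i, vecNorm (z i) ≤ 1)
  {ℓ ℓ' : ℝ → ℝ} {β G : ℝ}

include hdimL hn hz hL in
lemma abs_dirDeriv_le (hG : ∀ a : ℝ, |ℓ' a| ≤ G) (W D : Layers dim) (R : ℝ) (hR : 1 ≤ R)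
    (hW : ∀ k < L, frobNorm (W k) ≤ R) :
    |dirDeriv L ℓ' z W D| ≤ G * (R ^ (L-1) * ∑ k ∈ Finset.range L, frobNorm (D k)) := by
  refine abs_average_le hn _ _ fun i => ?_
  rw [abs_mul]
  have hb := (segment_bounds L W D R 0 hR le_rfl hW (by simpa [line_zero] using hW)
    (z i) (hz i) L le_rfl).2.1
  rw [line_zero] at hb
  refine mul_le_mul (hG _) ((abs_sum_le_vecNorm hdimL _).trans ?_) (abs_nonneg _)
    ((abs_nonneg _).trans (hG 0))
  refine le_of_mul_le_mul_left (hb.trans_eq ?_) (by linarith : 0 < R)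
  rw [← mul_assoc, mul_pow_sub_one (by omega)]

include hdimL hn hz hL in
/-- The directional derivative is Lipschitz along a segment inside the ball of radius `R`. -/
lemma abs_dirDeriv_line_sub_le (hβ : ∀ a b : ℝ, |ℓ' a - ℓ' b| ≤ β * |a - b|) (hβ0 : 0 ≤ β)
    (hG : ∀ a : ℝ, |ℓ' a| ≤ G) (W D : Layers dim) (R s : ℝ) (hR : 1 ≤ R) (hs : 0 ≤ s)
    (hW : ∀ k < L, frobNorm (W k) ≤ R) (hV : ∀ k < L, frobNorm (line W D s k) ≤ R) :
    |dirDeriv L ℓ' z (line W D s) D - dirDeriv L ℓ' z W D|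
      ≤ s * (R ^ (2*L-2) * (β + G) * (∑ k ∈ Finset.range L, frobNorm (D k)) ^ 2) := by
  unfold dirDeriv
  rw [← mul_sub, ← Finset.sum_sub_distrib]
  refine abs_average_le hn _ _ fun i => ?_
  obtain ⟨-, h2, h3, h4⟩ := segment_bounds L W D R s hR hs hW hV (z i) (hz i) L le_rfl
  simp only [wprod_dotProduct]
  set S := ∑ k ∈ Finset.range L, frobNorm (D k)
  have hS : 0 ≤ S := Finset.sum_nonneg fun k _ => frobNorm_nonneg _
  set V := line W D s
  have hR0 : 0 < R := by linarith
  have hG0 : 0 ≤ G := (abs_nonneg _).trans (hG 0)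
  obtain ⟨m, rfl⟩ : ∃ m, L = m + 1 := ⟨L - 1, by omega⟩
  have hexp : 2 * (m + 1) - 2 = m + m := by omega
  rw [hexp, pow_add]
  have hp : 1 ≤ R ^ m := one_le_pow₀ hR
  set a := ∑ a, fwd V (z i) (m+1) a
  set b := ∑ a, fwd W (z i) (m+1) a
  set a' := ∑ a, tang V D (z i) (m+1) a
  set b' := ∑ a, tang W D (z i) (m+1) a
  have k1 : |a'| ≤ R ^ m * S := by
    refine (abs_sum_le_vecNorm hdimL _).trans (le_of_mul_le_mul_left (h2.trans_eq ?_) hR0)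
    ring
  have k2 : |a - b| ≤ s * R ^ m * S := by
    have : a - b = ∑ x, (fwd V (z i) (m+1) - fwd W (z i) (m+1)) x := by
      simp [a, b]
    rw [this]
    refine (abs_sum_le_vecNorm hdimL _).trans (le_of_mul_le_mul_left (h3.trans_eq ?_) hR0)
    ring
  have k3 : |a' - b'| ≤ s * (R ^ m * R ^ m) * S ^ 2 := by
    have : a' - b' = ∑ x, (tang V D (z i) (m+1) - tang W D (z i) (m+1)) x := by
      simp [a', b']
    rw [this]
    refine (abs_sum_le_vecNorm hdimL _).trans
      (le_of_mul_le_mul_left (h4.trans ?_) (by positivity : 0 < R ^ 2))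
    have : R ^ (m+1) ≤ R ^ 2 * (R ^ m * R ^ m) := by
      rw [← pow_add, ← pow_add]
      exact pow_le_pow_right₀ hR (by omega)
    calc s * R ^ (m+1) * S ^ 2 ≤ s * (R ^ 2 * (R ^ m * R ^ m)) * S ^ 2 := by gcongr
      _ = _ := by ring
  have e : ℓ' a * a' - ℓ' b * b' = (ℓ' a - ℓ' b) * a' + ℓ' b * (a' - b') := by ring
  calc |ℓ' a * a' - ℓ' b * b'| ≤ |ℓ' a - ℓ' b| * |a'| + |ℓ' b| * |a' - b'| := by
        rw [e, ← abs_mul, ← abs_mul]; exact abs_add_le _ _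
    _ ≤ (β * (s * R ^ m * S)) * (R ^ m * S) + G * (s * (R ^ m * R ^ m) * S ^ 2) := by
        have := (hβ a b).trans (mul_le_mul_of_nonneg_left k2 hβ0)
        have := hG b
        gcongr
    _ = _ := by ring

include hdimL hn hz hL in
/-- The descent inequality for a segment inside the ball of radius `R`. -/
lemma riskW_line_le (hderiv : ∀ s : ℝ, HasDerivAt ℓ (ℓ' s) s)
    (hβ : ∀ a b : ℝ, |ℓ' a - ℓ' b| ≤ β * |a - b|) (hβ0 : 0 ≤ β)
    (hG : ∀ a : ℝ, |ℓ' a| ≤ G) (W D : Layers dim) (R : ℝ) (hR : 1 ≤ R)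
    (hW : ∀ k < L, frobNorm (W k) + frobNorm (D k) ≤ R) :
    riskW L ℓ z (line W D 1) ≤ riskW L ℓ z W + dirDeriv L ℓ' z W D
      + R ^ (2*L-2) * (β + G) * (∑ k ∈ Finset.range L, frobNorm (D k)) ^ 2 / 2 := by
  set K := R ^ (2*L-2) * (β + G) * (∑ k ∈ Finset.range L, frobNorm (D k)) ^ 2 with hK
  set c := dirDeriv L ℓ' z W D
  have hd : ∀ s, HasDerivAt (fun s => riskW L ℓ z (line W D s) - (c * s + K * s ^ 2 / 2))
      (dirDeriv L ℓ' z (line W D s) D - (c + K * s)) s := by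
    intro s
    refine (hasDerivAt_riskW L ℓ ℓ' hderiv z W D s).sub ?_
    have h1 := (hasDerivAt_id s).const_mul c
    have h2 := (((hasDerivAt_id s).pow 2).const_mul K).div_const 2
    refine (h1.add h2).congr_deriv ?_
    simp
    ring
  have hanti : AntitoneOn (fun s => riskW L ℓ z (line W D s) - (c * s + K * s ^ 2 / 2))
      (Set.Icc 0 1) := by
    refine antitoneOn_of_deriv_nonpos (convex_Icc 0 1)
      (fun s _ => (hd s).continuousAt.continuousWithinAt)
      (fun s _ => (hd s).differentiableAt.differentiableWithinAt) fun s hs => ?_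
    rw [interior_Icc] at hs
    rw [(hd s).deriv]
    have hline : ∀ k < L, frobNorm (line W D s k) ≤ R := by
      intro k hk
      refine (frobNorm_add_le _ _).trans (le_trans ?_ (hW k hk))
      rw [frobNorm_smul, abs_of_pos hs.1]
      nlinarith [frobNorm_nonneg (D k), hs.2]
    have h := abs_dirDeriv_line_sub_le hL hdimL hn hz hβ hβ0 hG W D R s hR hs.1.le
      (fun k hk => by linarith [hW k hk, frobNorm_nonneg (D k)]) hline
    rw [← hK] at h
    have := (abs_le.1 h).2
    linarith
  have h := hanti (Set.left_mem_Icc.2 zero_le_one) (Set.right_mem_Icc.2 zero_le_one) zero_le_one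
  simp only [line_zero] at h
  linarith

end Smoothness

lemma riskW_congr (L : ℕ) (ℓ : ℝ → ℝ) {n : ℕ} (z : Fin n → Fin (dim 0) → ℝ)
    {W V : Layers dim} (h : ∀ k < L, W k = V k) : riskW L ℓ z W = riskW L ℓ z V := by
  have : ∀ j ≤ L, prodUpTo W j = prodUpTo V j := by
    intro j
    induction j with
    | zero => intro _; rfl
    | succ j ih => intro hj; simp only [prodUpTo]; rw [ih (by omega), h j (by omega)]
  have hw : wprod L W = wprod L V := by
    funext j; unfold wprod; rw [this L le_rfl]
  rw [riskW, riskW, hw]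

lemma sum_frobNorm_sq_le (L : ℕ) (D : Layers dim) :
    (∑ k ∈ Finset.range L, frobNorm (D k)) ^ 2
      ≤ L * ∑ k ∈ Finset.range L, frobNorm (D k) ^ 2 := by
  simpa using sq_sum_le_card_mul_sum_sq (s := Finset.range L) (f := fun k => frobNorm (D k))

/-- One gradient descent step from a point of the ball of radius `R - 1` decreases the risk by at
least half the step size times the squared gradient norm. -/
lemma descent_step {L n : ℕ} (hL : 1 ≤ L) (hdimL : dim L = 1) (hn : 0 < n)
    {z : Fin n → Fin (dim 0) → ℝ} (hz : ∀ i, vecNorm (z i) ≤ 1)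
    {ℓ ℓ' : ℝ → ℝ} {β G : ℝ} (hderiv : ∀ s : ℝ, HasDerivAt ℓ (ℓ' s) s)
    (hβ : ∀ a b : ℝ, |ℓ' a - ℓ' b| ≤ β * |a - b|) (hβ0 : 0 ≤ β)
    (hG : ∀ a : ℝ, |ℓ' a| ≤ G) (hG0 : 0 < G) (W V : Layers dim) (η R : ℝ) (hR : 1 ≤ R)
    (hη0 : 0 ≤ η) (hη : η * (2 * (L : ℝ)^2 * R^(2*L-2) * (β + G)) ≤ 1)
    (hW : ∀ k < L, frobNorm (W k) ≤ R - 1)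
    (hV : ∀ k < L, V k = W k - η • gradLayer L ℓ' z W k) :
    riskW L ℓ z V ≤ riskW L ℓ z W - η / 2 * gradNormSq L ℓ' z W := by
  set g : Layers dim := fun k => gradLayer L ℓ' z W k
  have hN : gradNormSq L ℓ' z W = ∑ k ∈ Finset.range L, frobNorm (g k) ^ 2 := rfl
  set N := gradNormSq L ℓ' z W
  have hN0 : 0 ≤ N := by rw [hN]; positivity
  set S := ∑ k ∈ Finset.range L, frobNorm (g k) with hS
  have hS0 : 0 ≤ S := Finset.sum_nonneg fun k _ => frobNorm_nonneg _
  have hSN : S ^ 2 ≤ L * N := by rw [hN]; exact sum_frobNorm_sq_le L g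
  have hL' : (1 : ℝ) ≤ L := by exact_mod_cast hL
  have hR0 : 0 < R := by linarith
  have hpow : R ^ (L-1) ≤ R ^ (2*L-2) := pow_le_pow_right₀ hR (by omega)
  have hP : 0 < R ^ (2*L-2) := by positivity
  set P := R ^ (2*L-2)
  -- Pairing the gradient with itself gives `N ≤ G P S`, so `S ≤ L G P`: the step is
  -- too short to leave the ball of radius `R`.
  have hNS : N ≤ G * (P * S) := by
    have h1 : dirDeriv L ℓ' z W g = N := by
      rw [dirDeriv_eq_sum, hN]
      exact Finset.sum_congr rfl fun k _ => frobInner_self _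
    have h2 := abs_dirDeriv_le hL hdimL hn hz hG W g R hR (fun k hk => by linarith [hW k hk])
    rw [h1, abs_of_nonneg hN0] at h2
    refine h2.trans ?_
    gcongr
  have hSle : S ≤ L * (G * P) := by
    by_contra! hlt
    have : 0 < S := lt_of_le_of_lt (by positivity) hlt
    nlinarith [mul_le_mul_of_nonneg_left hNS (by linarith : (0 : ℝ) ≤ L),
      mul_lt_mul_of_pos_right hlt this]
  have hηS : η * S ≤ 1 := by
    refine le_trans ?_ hη
    refine mul_le_mul_of_nonneg_left (hSle.trans ?_) hη0
    have h1 : (L : ℝ) ≤ 2 * (L : ℝ) ^ 2 := by nlinarith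
    calc (L : ℝ) * (G * P) ≤ (2 * (L : ℝ) ^ 2) * ((β + G) * P) := by gcongr; linarith
      _ = _ := by ring
  set D : Layers dim := fun k => (-η) • g k
  have hDn : ∀ k, frobNorm (D k) = η * frobNorm (g k) := by
    intro k; simp only [D, frobNorm_smul, abs_neg, abs_of_nonneg hη0]
  have hDS : ∑ k ∈ Finset.range L, frobNorm (D k) = η * S := by
    simp only [hDn, hS, Finset.mul_sum]
  have hball : ∀ k < L, frobNorm (W k) + frobNorm (D k) ≤ R := by
    intro k hk
    have h1 : frobNorm (g k) ≤ S := Finset.single_le_sum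
      (f := fun k => frobNorm (g k)) (fun k _ => frobNorm_nonneg _) (Finset.mem_range.2 hk)
    rw [hDn]
    linarith [hW k hk, mul_le_mul_of_nonneg_left h1 hη0]
  have hVl : riskW L ℓ z V = riskW L ℓ z (line W D 1) := by
    refine riskW_congr L ℓ z fun k hk => ?_
    rw [hV k hk]
    simp [line, D, g, sub_eq_add_neg]
  have hdd : dirDeriv L ℓ' z W D = -η * N := by
    rw [dirDeriv_eq_sum, hN, Finset.mul_sum]
    refine Finset.sum_congr rfl fun k _ => ?_
    rw [← frobInner_self]
    exact frobInner_smul_right _ _ _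
  have h := riskW_line_le (ℓ := ℓ) hL hdimL hn hz hderiv hβ hβ0 hG W D R hR hball
  rw [hDS, hdd, ← hVl] at h
  have hquad : P * (β + G) * (η * S) ^ 2 ≤ η * N := by
    have hbg : 0 < β + G := by linarith
    calc P * (β + G) * (η * S) ^ 2 = (P * (β + G) * η ^ 2) * S ^ 2 := by ring
      _ ≤ (P * (β + G) * η ^ 2) * (L * N) := by gcongr
      _ = (η * N) * (η * (L * P * (β + G))) := by ring
      _ ≤ (η * N) * (η * (2 * (L : ℝ) ^ 2 * P * (β + G))) := by
          have h1 : (L : ℝ) ≤ 2 * (L : ℝ) ^ 2 := by nlinarith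
          gcongr
      _ ≤ (η * N) * 1 := by gcongr
      _ = η * N := mul_one _
  linarith

/-- A decreasing loss that tends to `0` at infinity is nonnegative. -/
lemma loss_nonneg {ℓ ℓ' : ℝ → ℝ} (hderiv : ∀ s : ℝ, HasDerivAt ℓ (ℓ' s) s)
    (hneg : ∀ s : ℝ, ℓ' s < 0) (htop : Tendsto ℓ atTop (nhds 0)) (s : ℝ) : 0 ≤ ℓ s := by
  have h : Antitone ℓ := antitone_of_deriv_nonpos (fun s => (hderiv s).differentiableAt)
    fun s => by rw [(hderiv s).deriv]; exact (hneg s).le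
  exact h.le_of_tendsto htop s

end Network

theorem stmt19
    (dim : ℕ → ℕ) (L n : ℕ) (hL : 1 ≤ L) (hdimL : dim L = 1) (hn : 0 < n)
    (x : Fin n → Fin (dim 0) → ℝ) (y : Fin n → ℝ) (z : Fin n → Fin (dim 0) → ℝ)
    (hx : ∀ i, vecNorm (x i) ≤ 1) (hy : ∀ i, y i = 1 ∨ y i = -1)
    (hz : ∀ i, z i = y i • x i)
    (ℓ ℓ' : ℝ → ℝ) (hderiv : ∀ s : ℝ, HasDerivAt ℓ (ℓ' s) s) (hcont : Continuous ℓ')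
    (hneg : ∀ s : ℝ, ℓ' s < 0)
    (hbot : Tendsto ℓ atBot atTop) (htop : Tendsto ℓ atTop (nhds 0))
    (β G : ℝ) (hβ : ∀ a b : ℝ, |ℓ' a - ℓ' b| ≤ β * |a - b|) (hG : ∀ a : ℝ, |ℓ' a| ≤ G)
    (W : ℕ → Layers dim) (η : ℕ → ℝ) (Rseq : ℕ → ℝ)
    (hGD : ∀ t : ℕ, ∀ k < L, W (t+1) k = W t k - η t • gradLayer L ℓ' z (W t) k)
    (hη : ∀ t, η t = min (2 * (L : ℝ)^2 * (Rseq t)^(2*L-2) * (β + G))⁻¹ 1)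
    (hR1 : ∀ t, 1 ≤ Rseq t)
    (hRt : ∀ t, ∀ k < L, frobNorm (W t k) ≤ Rseq t - 1)
    (hRmono : ∀ t, (∀ k < L, frobNorm (W (t+1) k) ≤ Rseq t - 1) → Rseq (t+1) = Rseq t)
    :
    (∀ t : ℕ,
        (∑ τ ∈ Finset.range t, (η τ) ^ 2 * gradNormSq L ℓ' z (W τ)
            ≤ ∑ τ ∈ Finset.range t, η τ * gradNormSq L ℓ' z (W τ))
        ∧ (∑ τ ∈ Finset.range t, η τ * gradNormSq L ℓ' z (W τ)
            ≤ 2 * riskW L ℓ z (W 0) - 2 * riskW L ℓ z (W t))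
        ∧ 2 * riskW L ℓ z (W 0) - 2 * riskW L ℓ z (W t) ≤ 2 * riskW L ℓ z (W 0))
    ∧ (∀ t : ℕ, ∀ k j : ℕ, k < j → j < L →
        |(frobNorm (W t k) ^ 2 - frobNorm (W t j) ^ 2)
            - (frobNorm (W 0 k) ^ 2 - frobNorm (W 0 j) ^ 2)|
          ≤ 2 * riskW L ℓ z (W 0)) := by
  have hz1 : ∀ i, vecNorm (z i) ≤ 1 := by
    intro i
    rw [hz i, vecNorm_smul]
    rcases hy i with h | h <;> simpa [h] using hx i
  have hG0 : 0 < G := (abs_pos.2 (hneg 0).ne).trans_le (hG 0)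
  have hβ0 : 0 ≤ β := by
    have := (abs_nonneg _).trans (hβ 1 0)
    simpa using this
  have hL' : (0 : ℝ) < L := by exact_mod_cast hL
  have hK : ∀ t, 0 < 2 * (L : ℝ)^2 * (Rseq t)^(2*L-2) * (β + G) := by
    intro t
    have : 0 < Rseq t := by linarith [hR1 t]
    positivity
  have hη0 : ∀ t, 0 ≤ η t := by
    intro t
    rw [hη t]
    exact le_min (inv_pos.2 (hK t)).le zero_le_one
  have hη1 : ∀ t, η t ≤ 1 := by
    intro t
    rw [hη t]
    exact min_le_right _ _
  have hηK : ∀ t, η t * (2 * (L : ℝ)^2 * (Rseq t)^(2*L-2) * (β + G)) ≤ 1 := by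
    intro t
    rw [← inv_mul_cancel₀ (hK t).ne']
    refine mul_le_mul_of_nonneg_right ?_ (hK t).le
    rw [hη t]
    exact min_le_left _ _
  have hN0 : ∀ t, 0 ≤ gradNormSq L ℓ' z (W t) := by
    intro t
    unfold gradNormSq
    positivity
  have hrisk : ∀ t, 0 ≤ riskW L ℓ z (W t) := by
    intro t
    unfold riskW riskV
    exact mul_nonneg (by positivity)
      (Finset.sum_nonneg fun i _ => loss_nonneg hderiv hneg htop _)
  have hstep : ∀ t, riskW L ℓ z (W (t+1))
      ≤ riskW L ℓ z (W t) - η t / 2 * gradNormSq L ℓ' z (W t) := fun t =>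
    descent_step hL hdimL hn hz1 hderiv hβ hβ0 hG hG0 (W t) (W (t+1)) (η t) (Rseq t) (hR1 t)
      (hη0 t) (hηK t) (hRt t) (hGD t)
  have hsum1 : ∀ t, ∑ τ ∈ Finset.range t, (η τ) ^ 2 * gradNormSq L ℓ' z (W τ)
      ≤ ∑ τ ∈ Finset.range t, η τ * gradNormSq L ℓ' z (W τ) := by
    intro t
    refine Finset.sum_le_sum fun τ _ => mul_le_mul_of_nonneg_right ?_ (hN0 τ)
    nlinarith [hη0 τ, hη1 τ]
  have hsum2 : ∀ t, ∑ τ ∈ Finset.range t, η τ * gradNormSq L ℓ' z (W τ)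
      ≤ 2 * riskW L ℓ z (W 0) - 2 * riskW L ℓ z (W t) := by
    intro t
    induction t with
    | zero => simp
    | succ t ih =>
      rw [Finset.sum_range_succ]
      linarith [hstep t]
  refine ⟨fun t => ⟨hsum1 t, hsum2 t, by linarith [hrisk t]⟩, fun t k j hkj hj => ?_⟩
  -- The cross terms `⟨∂R/∂W_k, W_k⟩` agree for both layers, so only second-order terms in the
  -- step size contribute to the change of the difference of squared norms.
  have hdiff : |(frobNorm (W t k) ^ 2 - frobNorm (W t j) ^ 2)
      - (frobNorm (W 0 k) ^ 2 - frobNorm (W 0 j) ^ 2)|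
      ≤ ∑ τ ∈ Finset.range t, (η τ) ^ 2 * gradNormSq L ℓ' z (W τ) := by
    induction t with
    | zero => simp
    | succ t ih =>
      rw [Finset.sum_range_succ, hGD t k (hkj.trans hj), hGD t j hj, frobNorm_sub_smul_sq,
        frobNorm_sub_smul_sq, frobInner_gradLayer_self L ℓ' z (W t) k (hkj.trans hj),
        frobInner_gradLayer_self L ℓ' z (W t) j hj]
      have hle : ∀ i < L, frobNorm (gradLayer L ℓ' z (W t) i) ^ 2 ≤ gradNormSq L ℓ' z (W t) :=
        fun i hi => Finset.single_le_sum
          (f := fun i => frobNorm (gradLayer L ℓ' z (W t) i) ^ 2)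
          (fun i _ => sq_nonneg _) (Finset.mem_range.2 hi)
      have hk2 := mul_le_mul_of_nonneg_left (hle k (hkj.trans hj)) (sq_nonneg (η t))
      have hj2 := mul_le_mul_of_nonneg_left (hle j hj) (sq_nonneg (η t))
      have hk0 := mul_nonneg (sq_nonneg (η t)) (sq_nonneg (frobNorm (gradLayer L ℓ' z (W t) k)))
      have hj0 := mul_nonneg (sq_nonneg (η t)) (sq_nonneg (frobNorm (gradLayer L ℓ' z (W t) j)))
      rw [abs_le] at ih ⊢
      constructor <;> linarith [ih.1, ih.2]
  linarith [hsum1 t, hsum2 t, hrisk t]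


end
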